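/- Let R be a left noetherian ring and a left FGF-ring. Then the following are equivalent: (1) R is a quasi-Frobenius ring; (2) R is weakly quasi-Frobenius; (3) R is left FP-injective; (4) R is a right Kasch ring; (5) R is semiregular; (6) R is left or right semiartinian; (7) the socle soc(_RR) is an essential submodule of the left module _RR. -/

import Mathlib

/-!
Common definitions: rings are associative with identity, not necessarily commutative.
Left `R`-modules are `Module R M`; right `R`-modules are `Module Rᵐᵒᵖ M`.
-/

universe u

open MulOpposite Function Pointwise

section Defs

variable (R : Type u) [Ring R]

/-- Defining relations of the tensor product `K ⊗_R M` of a right `R`-module `K`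
and a left `R`-module `M`, inside the free abelian group on `K × M`. -/
def TensorRels (K M : Type u) [AddCommGroup K] [Module Rᵐᵒᵖ K]
    [AddCommGroup M] [Module R M] : AddSubgroup (FreeAbelianGroup (K × M)) :=
  AddSubgroup.closure
    ({x | ∃ k₁ k₂ m, x = FreeAbelianGroup.of (k₁ + k₂, m) - FreeAbelianGroup.of (k₁, m) -
        FreeAbelianGroup.of (k₂, m)} ∪
     {x | ∃ k m₁ m₂, x = FreeAbelianGroup.of (k, m₁ + m₂) - FreeAbelianGroup.of (k, m₁) -
        FreeAbelianGroup.of (k, m₂)} ∪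
     {x | ∃ (r : R) (k : K) (m : M),
        x = FreeAbelianGroup.of (op r • k, m) - FreeAbelianGroup.of (k, r • m)})

/-- The tensor product `K ⊗_R M` of a right `R`-module `K` and a left `R`-module `M`
over the (not necessarily commutative) ring `R`, as an abelian group. -/
def NCTensor (K M : Type u) [AddCommGroup K] [Module Rᵐᵒᵖ K]
    [AddCommGroup M] [Module R M] : Type u :=
  FreeAbelianGroup (K × M) ⧸ TensorRels R K M

instance (K M : Type u) [AddCommGroup K] [Module Rᵐᵒᵖ K] [AddCommGroup M] [Module R M] :
    AddCommGroup (NCTensor R K M) :=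
  QuotientAddGroup.Quotient.addCommGroup _

/-- The map `μ ⊗ ν : K ⊗_R M → K' ⊗_R M'` induced by a map `μ` of right `R`-modules
and a map `ν` of left `R`-modules. -/
def tensorCongr {K K' M M' : Type u} [AddCommGroup K] [Module Rᵐᵒᵖ K]
    [AddCommGroup K'] [Module Rᵐᵒᵖ K'] [AddCommGroup M] [Module R M]
    [AddCommGroup M'] [Module R M'] (μ : K →ₗ[Rᵐᵒᵖ] K') (ν : M →ₗ[R] M') :
    NCTensor R K M →+ NCTensor R K' M' :=
  QuotientAddGroup.map (TensorRels R K M) (TensorRels R K' M')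
    (FreeAbelianGroup.lift fun p : K × M => FreeAbelianGroup.of (μ p.1, ν p.2))
    (by
      refine (AddSubgroup.closure_le _).2 ?_
      rintro x ((⟨k₁, k₂, m, rfl⟩ | ⟨k, m₁, m₂, rfl⟩) | ⟨r, k, m, rfl⟩) <;>
        refine AddSubgroup.mem_comap.2 (AddSubgroup.subset_closure ?_)
      · exact Or.inl <| Or.inl ⟨μ k₁, μ k₂, ν m, by simp [map_add]⟩
      · exact Or.inl <| Or.inr ⟨μ k, ν m₁, ν m₂, by simp [map_add]⟩
      · exact Or.inr ⟨r, μ k, ν m, by simp [map_smul]⟩)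

/-- A left `R`-module `M` is flat if `μ ⊗ M` is injective for every injective
homomorphism `μ` of right `R`-modules. -/
def ModFlat (M : Type u) [AddCommGroup M] [Module R M] : Prop :=
  ∀ (K L : Type u) [AddCommGroup K] [Module Rᵐᵒᵖ K] [AddCommGroup L] [Module Rᵐᵒᵖ L]
    (μ : K →ₗ[Rᵐᵒᵖ] L), Injective μ →
      Injective (tensorCongr R μ (LinearMap.id : M →ₗ[R] M))

/-- A right `R`-module `M` is flat if `M ⊗ μ` is injective for every injective
homomorphism `μ` of left `R`-modules. -/
def ModFlatRight (M : Type u) [AddCommGroup M] [Module Rᵐᵒᵖ M] : Prop :=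
  ∀ (K L : Type u) [AddCommGroup K] [Module R K] [AddCommGroup L] [Module R L]
    (μ : K →ₗ[R] L), Injective μ →
      Injective (tensorCongr R (LinearMap.id : M →ₗ[Rᵐᵒᵖ] M) μ)

/-- A left `R`-module `M` is fp-flat if `μ ⊗ M` is injective for every injective
homomorphism `μ` of finitely presented right `R`-modules. -/
def FpFlat (M : Type u) [AddCommGroup M] [Module R M] : Prop :=
  ∀ (K L : Type u) [AddCommGroup K] [Module Rᵐᵒᵖ K] [AddCommGroup L] [Module Rᵐᵒᵖ L],
    Module.FinitePresentation Rᵐᵒᵖ K → Module.FinitePresentation Rᵐᵒᵖ L →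
    ∀ (μ : K →ₗ[Rᵐᵒᵖ] L), Injective μ →
      Injective (tensorCongr R μ (LinearMap.id : M →ₗ[R] M))

/-- A right `R`-module `M` is fp-flat if `M ⊗ μ` is injective for every injective
homomorphism `μ` of finitely presented left `R`-modules. -/
def FpFlatRight (M : Type u) [AddCommGroup M] [Module Rᵐᵒᵖ M] : Prop :=
  ∀ (K L : Type u) [AddCommGroup K] [Module R K] [AddCommGroup L] [Module R L],
    Module.FinitePresentation R K → Module.FinitePresentation R L →
    ∀ (μ : K →ₗ[R] L), Injective μ →
      Injective (tensorCongr R (LinearMap.id : M →ₗ[Rᵐᵒᵖ] M) μ)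

/-- `Ext¹_R(F, M) = 0`. -/
def ExtVanish (F M : Type u) [AddCommGroup F] [Module R F] [AddCommGroup M] [Module R M] :
    Prop :=
  Subsingleton
    (((Ext ℤ (ModuleCat.{u} R) 1).obj (Opposite.op (ModuleCat.of R F))).obj (ModuleCat.of R M))

/-- A left `R`-module `M` is FP-injective (absolutely pure) if `Ext¹_R(F, M) = 0` for
every finitely presented left `R`-module `F`. -/
def FPInjective (M : Type u) [AddCommGroup M] [Module R M] : Prop :=
  ∀ (F : Type u) [AddCommGroup F] [Module R F], Module.FinitePresentation R F → ExtVanish R F M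

/-- A left `R`-module `M` is fp-injective if for every injective homomorphism `μ : K → L`
of finitely presented left `R`-modules, the induced map `Hom(L, M) → Hom(K, M)` is
surjective. -/
def FpInjective (M : Type u) [AddCommGroup M] [Module R M] : Prop :=
  ∀ (K L : Type u) [AddCommGroup K] [Module R K] [AddCommGroup L] [Module R L],
    Module.FinitePresentation R K → Module.FinitePresentation R L →
    ∀ (μ : K →ₗ[R] L), Injective μ → ∀ f : K →ₗ[R] M, ∃ g : L →ₗ[R] M, g ∘ₗ μ = f

/-- A left `R`-module `K` is an FP-cogenerator if for every nonzero homomorphism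
`f : M → N` from a finitely generated module `M` to a finitely presented module `N`
there is `g : N → K` with `g ∘ f ≠ 0`. -/
def IsFPCogenerator (K : Type u) [AddCommGroup K] [Module R K] : Prop :=
  ∀ (M N : Type u) [AddCommGroup M] [Module R M] [AddCommGroup N] [Module R N],
    Module.Finite R M → Module.FinitePresentation R N →
    ∀ f : M →ₗ[R] N, f ≠ 0 → ∃ g : N →ₗ[R] K, g ∘ₗ f ≠ 0

/-- A left `R`-module `K` is a cogenerator if for every nonzero homomorphism `f : M → N`
of left `R`-modules there is `g : N → K` with `g ∘ f ≠ 0`. -/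
def IsCogenerator (K : Type u) [AddCommGroup K] [Module R K] : Prop :=
  ∀ (M N : Type u) [AddCommGroup M] [Module R M] [AddCommGroup N] [Module R N],
    ∀ f : M →ₗ[R] N, f ≠ 0 → ∃ g : N →ₗ[R] K, g ∘ₗ f ≠ 0

/-- The canonical evaluation map `M → M** = Hom(Hom(M, R), R)` for a left `R`-module `M`;
here `M* = Hom_R(M, R)` is a right `R`-module. -/
def dualEval (M : Type u) [AddCommGroup M] [Module R M] :
    M →ₗ[R] ((M →ₗ[R] R) →ₗ[Rᵐᵒᵖ] R) where
  toFun m :=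
    { toFun := fun f => f m
      map_add' := fun f g => rfl
      map_smul' := fun r f => rfl }
  map_add' m m' := LinearMap.ext fun f => f.map_add m m'
  map_smul' r m := LinearMap.ext fun f => by simp [f.map_smul]

/-- The canonical evaluation map `M → M** = Hom(Hom(M, R), R)` for a right `R`-module `M`;
here `M* = Hom_R(M, R)` is a left `R`-module. -/
def dualEvalRight (M : Type u) [AddCommGroup M] [Module Rᵐᵒᵖ M] :
    M →ₗ[Rᵐᵒᵖ] ((M →ₗ[Rᵐᵒᵖ] R) →ₗ[R] R) where
  toFun m :=
    { toFun := fun f => f m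
      map_add' := fun f g => rfl
      map_smul' := fun r f => rfl }
  map_add' m m' := LinearMap.ext fun f => f.map_add m m'
  map_smul' r m := LinearMap.ext fun f => by simp [f.map_smul]

/-- The left annihilator of a subset `X ⊆ R`. -/
def lAnn (X : Set R) : Set R := {a | ∀ x ∈ X, a * x = 0}

/-- The right annihilator of a subset `X ⊆ R`. -/
def rAnn (X : Set R) : Set R := {a | ∀ x ∈ X, x * a = 0}

/-- `R` is left coherent: every finitely generated left ideal is finitely presented. -/
def LeftCoherent : Prop :=
  ∀ I : Submodule R R, I.FG → Module.FinitePresentation R I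

/-- `R` is right coherent: every finitely generated right ideal is finitely presented. -/
def RightCoherent : Prop :=
  ∀ I : Submodule Rᵐᵒᵖ R, I.FG → Module.FinitePresentation Rᵐᵒᵖ I

/-- A left `R`-module `M` embeds in a free left `R`-module. -/
def EmbedsInFree (M : Type u) [AddCommGroup M] [Module R M] : Prop :=
  ∃ (ι : Type u) (f : M →ₗ[R] (ι →₀ R)), Injective f

/-- A right `R`-module `M` embeds in a free right `R`-module. -/
def EmbedsInFreeRight (M : Type u) [AddCommGroup M] [Module Rᵐᵒᵖ M] : Prop :=
  ∃ (ι : Type u) (f : M →ₗ[Rᵐᵒᵖ] (ι →₀ R)), Injective f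

/-- `R` is a left IF-ring: every finitely presented left `R`-module embeds in a free module. -/
def LeftIF : Prop :=
  ∀ (M : Type u) [AddCommGroup M] [Module R M],
    Module.FinitePresentation R M → EmbedsInFree R M

/-- `R` is a right IF-ring: every finitely presented right `R`-module embeds in a free module. -/
def RightIF : Prop :=
  ∀ (M : Type u) [AddCommGroup M] [Module Rᵐᵒᵖ M],
    Module.FinitePresentation Rᵐᵒᵖ M → EmbedsInFreeRight R M

/-- A module is cyclic if it is generated by one element. -/
def CyclicModule (M : Type u) [AddCommGroup M] [Module R M] : Prop :=
  ∃ m : M, Submodule.span R {m} = ⊤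

/-- `R` is a left CF-ring: every cyclic left `R`-module embeds in a free module. -/
def LeftCF : Prop :=
  ∀ (M : Type u) [AddCommGroup M] [Module R M], CyclicModule R M → EmbedsInFree R M

/-- `R` is a left FGF-ring: every finitely generated left `R`-module embeds in a free module. -/
def LeftFGF : Prop :=
  ∀ (M : Type u) [AddCommGroup M] [Module R M], Module.Finite R M → EmbedsInFree R M

/-- `R` is a left Kasch ring: `Hom_R(M, R) ≠ 0` for every nonzero cyclic left `R`-module. -/
def LeftKasch : Prop :=
  ∀ (M : Type u) [AddCommGroup M] [Module R M],
    CyclicModule R M → Nontrivial M → ∃ f : M →ₗ[R] R, f ≠ 0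

/-- `R` is a right Kasch ring: `Hom_R(M, R) ≠ 0` for every nonzero cyclic right `R`-module. -/
def RightKasch : Prop :=
  ∀ (M : Type u) [AddCommGroup M] [Module Rᵐᵒᵖ M],
    CyclicModule Rᵐᵒᵖ M → Nontrivial M → ∃ f : M →ₗ[Rᵐᵒᵖ] R, f ≠ 0

/-- The socle of a module: the sum of all its simple submodules. -/
def socle (M : Type u) [AddCommGroup M] [Module R M] : Submodule R M :=
  sSup {N : Submodule R M | IsSimpleModule R N}

/-- `R` is left semiartinian: every nonzero cyclic left `R`-module has a nonzero socle. -/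
def LeftSemiartinian : Prop :=
  ∀ (M : Type u) [AddCommGroup M] [Module R M],
    CyclicModule R M → Nontrivial M → socle R M ≠ ⊥

/-- A submodule `N ⊆ M` is essential if it meets every nonzero submodule nontrivially. -/
def EssentialSub {M : Type u} [AddCommGroup M] [Module R M] (N : Submodule R M) : Prop :=
  ∀ P : Submodule R M, P ≠ ⊥ → N ⊓ P ≠ ⊥

/-- `R` is semiregular: `R/rad R` is von Neumann regular,
where `rad R` is the Jacobson radical. -/
def Semiregular : Prop :=
  ∀ a : R, ∃ x : R, a - a * x * a ∈ Ideal.jacobson (⊥ : Ideal R)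

/-- `R` is semiperfect: `R/rad R` is semisimple and idempotents lift modulo `rad R`. -/
def Semiperfect : Prop :=
  IsSemisimpleModule R (R ⧸ Ideal.jacobson (⊥ : Ideal R)) ∧
    ∀ a : R, a * a - a ∈ Ideal.jacobson (⊥ : Ideal R) →
      ∃ e : R, e * e = e ∧ e - a ∈ Ideal.jacobson (⊥ : Ideal R)

/-- A module is indecomposable if it is nonzero and is not the direct sum of two
nonzero submodules. -/
def IndecModule (M : Type u) [AddCommGroup M] [Module R M] : Prop :=
  Nontrivial M ∧ ∀ A B : Submodule R M, IsCompl A B → A = ⊥ ∨ B = ⊥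

/-- `R` is weakly quasi-Frobenius: left and right coherent and left and right FP-injective. -/
def WQF : Prop :=
  LeftCoherent R ∧ RightCoherent R ∧ FPInjective R R ∧ FPInjective Rᵐᵒᵖ R

/-- `R` is quasi-Frobenius: left and right noetherian and left and right self-injective. -/
def QF : Prop :=
  IsNoetherianRing R ∧ IsNoetherian Rᵐᵒᵖ R ∧ Module.Injective R R ∧ Module.Injective Rᵐᵒᵖ R

end Defs

/-- A group is locally finite if every finitely generated subgroup is finite. -/
def LocallyFiniteGroup (G : Type*) [Group G] : Prop :=
  ∀ H : Subgroup G, H.FG → Finite H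

/-!
In a left noetherian left FGF-ring `R` the radical `J` is nilpotent, because left ideals are
recovered from their right annihilators. Each of the conditions (3)-(7) gives many idempotents in
`R / J`, which is therefore semisimple; so `R` is semiprimary, hence left artinian.

A semiprimary left FGF-ring is right Kasch: to a simple right module `U` one attaches a simple right
ideal killed on the left by the annihilator of `U`, and this assignment, being injective on the
finitely many isomorphism classes of simple right modules, reaches all of them.

Finally, as every finitely generated left module is cogenerated by `R`, a map `f : K → R` from a
finitely generated right module `K` is a left multiple of any map `i : K → R` with `ker i ≤ ker f`.
With the right Kasch condition this makes `R` right noetherian, and then self-injective on both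
sides.
-/

section Cyclic

variable {R : Type u} [Ring R] {M : Type u} [AddCommGroup M] [Module R M]

theorem cyclicModule_of_surjective {m : M}
    (hm : Surjective (LinearMap.toSpanSingleton R M m)) : CyclicModule R M :=
  ⟨m, by rw [← LinearMap.range_toSpanSingleton, LinearMap.range_eq_top.2 hm]⟩

theorem cyclicModule_span_singleton (m : M) : CyclicModule R (Submodule.span R {m}) := by
  refine cyclicModule_of_surjective (m := ⟨m, Submodule.mem_span_singleton_self m⟩) ?_
  exact fun ⟨x, hx⟩ => (Submodule.mem_span_singleton.1 hx).imp fun r hr => Subtype.ext hr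

theorem ne_zero_of_linearMap_span_singleton_ne_zero {N : Type*} [AddCommGroup N] [Module R N]
    {x : M} {g : Submodule.span R {x} →ₗ[R] N} (hg : g ≠ 0) :
    g ⟨x, Submodule.mem_span_singleton_self x⟩ ≠ 0 := by
  refine fun h0 => hg (LinearMap.ext fun ⟨y, hy⟩ => ?_)
  obtain ⟨r, rfl⟩ := Submodule.mem_span_singleton.1 hy
  exact (map_smul g r ⟨x, Submodule.mem_span_singleton_self x⟩).trans
    ((congrArg (r • ·) h0).trans (smul_zero r))

theorem cyclicModule_quotient (I : Ideal R) : CyclicModule R (R ⧸ I) :=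
  cyclicModule_of_surjective (m := I.mkQ 1) fun x => by
    obtain ⟨r, rfl⟩ := I.mkQ_surjective x
    exact ⟨r, by rw [LinearMap.toSpanSingleton_apply, ← map_smul, smul_eq_mul, mul_one]⟩

end Cyclic

section Jacobson

variable {R : Type*} [Ring R]

theorem isUnit_one_sub_mul_of_forall {x : R} (h : ∀ r, ∃ s, (1 - x * r) * s = 1) (r : R) :
    IsUnit (1 - x * r) := by
  obtain ⟨s, hs⟩ := h r
  have hs' : 1 - x * -(r * s) = s := by
    rw [sub_mul, one_mul, mul_assoc, sub_eq_iff_eq_add] at hs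
    rw [mul_neg, sub_neg_eq_add, ← hs]
  obtain ⟨t, ht⟩ := h (-(r * s))
  rw [hs'] at ht
  exact isUnit_iff_exists.2 ⟨s, hs, left_inv_eq_right_inv hs ht ▸ ht⟩

theorem mem_jacobson_of_forall_mul_eq_one {x : R} (h : ∀ r, ∃ s, (1 - x * r) * s = 1) :
    x ∈ Ring.jacobson R := by
  rw [← Ideal.jacobson_bot, Ideal.mem_jacobson_iff]
  intro y
  obtain ⟨s, -, hs⟩ := isUnit_iff_exists.1 (isUnit_one_sub_mul_of_forall h (-y))
  have hz : (1 - y * s * x) * y * x + (1 - y * s * x) - 1 = y * (1 - s * (1 - x * -y)) * x := by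
    noncomm_ring
  refine ⟨1 - y * s * x, ?_⟩
  rw [hz, hs, sub_self, mul_zero, zero_mul]
  exact zero_mem _

theorem mem_jacobson_of_op_mem_jacobson {x : R} (hx : op x ∈ Ring.jacobson Rᵐᵒᵖ) :
    x ∈ Ring.jacobson R := by
  rw [← Ideal.jacobson_bot, Ideal.mem_jacobson_iff] at hx
  refine mem_jacobson_of_forall_mul_eq_one fun r => ?_
  obtain ⟨z, hz⟩ := hx (op (-r))
  rw [Ideal.mem_bot, sub_eq_zero, mul_assoc] at hz
  refine ⟨unop z, op_injective ?_⟩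
  rw [op_mul, op_unop, op_sub, op_mul, mul_sub, op_one, mul_one, sub_eq_neg_add, ← mul_neg,
    ← neg_mul, ← op_neg, hz]

theorem op_mem_jacobson_iff {x : R} : op x ∈ Ring.jacobson Rᵐᵒᵖ ↔ x ∈ Ring.jacobson R := by
  refine ⟨mem_jacobson_of_op_mem_jacobson, fun hx => mem_jacobson_of_op_mem_jacobson ?_⟩
  have : RingHomSurjective (RingEquiv.opOp R).toRingHom := ⟨(RingEquiv.opOp R).surjective⟩
  exact Ring.le_comap_jacobson (RingEquiv.opOp R).toRingHom hx

end Jacobson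

section IdempotentRich

/-- Every nonzero left ideal of `R` contains a nonzero idempotent; equivalently, `R` is semipotent
with zero Jacobson radical. The equation `w * y * w = w` says that `w * y` and `y * w` are nonzero
idempotents in the left and in the right ideal generated by `y`, so that the notion is left-right
symmetric. -/
def IsIdempotentRich (R : Type*) [Ring R] : Prop :=
  ∀ y : R, y ≠ 0 → ∃ w ≠ 0, w * y * w = w

variable {R : Type*} [Ring R]

theorem isIdempotentRich_iff_exists_isIdempotentElem :
    IsIdempotentRich R ↔ ∀ y : R, y ≠ 0 → ∃ z, z * y ≠ 0 ∧ IsIdempotentElem (z * y) := by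
  refine ⟨fun h y hy => ?_, fun h y hy => ?_⟩
  · obtain ⟨w, hw, hwy⟩ := h y hy
    refine ⟨w, fun h0 => hw (by rw [← hwy, h0, zero_mul]), ?_⟩
    rw [IsIdempotentElem, ← mul_assoc, hwy]
  · obtain ⟨z, hz, hzy⟩ := h y hy
    refine ⟨z * y * z, fun h0 => hz (by rw [← hzy.eq, ← mul_assoc, h0, zero_mul]), ?_⟩
    calc z * y * z * y * (z * y * z) = z * y * (z * y) * (z * y) * z := by simp only [mul_assoc]
      _ = z * y * z := by rw [hzy.eq, hzy.eq]

theorem isCompl_span_of_isIdempotentElem {e : R} (he : IsIdempotentElem e) :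
    IsCompl (Ideal.span {e}) (Ideal.span {1 - e}) := by
  refine ⟨Submodule.disjoint_def.2 fun x hx hx' => ?_, ?_⟩
  · obtain ⟨a, rfl⟩ := Ideal.mem_span_singleton'.1 hx
    obtain ⟨b, hb⟩ := Ideal.mem_span_singleton'.1 hx'
    rw [← he.eq, ← mul_assoc, ← hb, mul_assoc, sub_mul, one_mul, he.eq, sub_self, mul_zero]
  · rw [codisjoint_iff, Ideal.eq_top_iff_one, Submodule.mem_sup]
    exact ⟨e, Ideal.mem_span_singleton_self e, 1 - e, Ideal.mem_span_singleton_self _,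
      add_sub_cancel e 1⟩

theorem exists_isIdempotentElem_span_lt {I : Ideal R} {e f : R} (he : IsIdempotentElem e)
    (heI : e ∈ I) (hf : IsIdempotentElem f) (hfI : f ∈ I) (hf0 : f ≠ 0) (hfe : f * e = 0) :
    ∃ g ∈ I, IsIdempotentElem g ∧ Ideal.span {e} < Ideal.span {g} := by
  set g := e + f - e * f
  have hge : g * e = e := by
    rw [sub_mul, add_mul, he.eq, mul_assoc, hfe, mul_zero, add_zero, sub_zero]
  have hgf : g * f = f := by rw [sub_mul, add_mul, mul_assoc, hf.eq, add_sub_cancel_left]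
  refine ⟨g, sub_mem (add_mem heI hfI) (I.mul_mem_left e hfI), ?_, lt_of_le_not_ge ?_ fun hle => ?_⟩
  · rw [IsIdempotentElem, mul_sub, mul_add, ← mul_assoc, hge, hgf]
  · exact (Ideal.span_singleton_le_iff_mem _).2 (Ideal.mem_span_singleton'.2 ⟨e, by
      rw [mul_sub, mul_add, he.eq, ← mul_assoc, he.eq, add_sub_cancel_right]⟩)
  · have hfg : f * g = f := by
      rw [mul_sub, mul_add, hfe, hf.eq, ← mul_assoc, hfe, zero_mul, zero_add, sub_zero]
    obtain ⟨a, ha⟩ := Ideal.mem_span_singleton'.1 (hle (Ideal.mem_span_singleton'.2 ⟨f, hfg⟩))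
    exact hf0 (by rw [← hfe, ← ha, mul_assoc, he.eq])

/-- A maximal left ideal `R e ≤ I` with `e` idempotent is all of `I`: for `x ∈ I` outside `R e`, an
idempotent in the left ideal of `x - x * e` enlarges it. -/
theorem IsIdempotentRich.exists_isIdempotentElem_span_eq [IsNoetherianRing R]
    (h : IsIdempotentRich R) (I : Ideal R) : ∃ e, IsIdempotentElem e ∧ Ideal.span {e} = I := by
  let S : Set (Ideal R) := {K | ∃ e ∈ I, IsIdempotentElem e ∧ Ideal.span {e} = K}
  obtain ⟨_, ⟨e, heI, he, rfl⟩, hmax⟩ := set_has_maximal_iff_noetherian.2 ‹_› S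
    ⟨⊥, 0, I.zero_mem, .zero, Ideal.span_singleton_eq_bot.2 rfl⟩
  refine ⟨e, he, le_antisymm ((Ideal.span_singleton_le_iff_mem I).2 heI) fun x hx => ?_⟩
  by_contra hxe
  have hy : x - x * e ≠ 0 := fun h0 =>
    hxe (Ideal.mem_span_singleton'.2 ⟨x, (sub_eq_zero.1 h0).symm⟩)
  obtain ⟨w, hw, hwy⟩ := isIdempotentRich_iff_exists_isIdempotentElem.1 h _ hy
  have hwI : w * (x - x * e) ∈ I := I.mul_mem_left _ (sub_mem hx (I.mul_mem_left _ heI))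
  obtain ⟨g, hgI, hg, hlt⟩ := exists_isIdempotentElem_span_lt he heI hwy hwI hw
    (by rw [mul_assoc, sub_mul, mul_assoc, he.eq, sub_self, mul_zero])
  exact hmax _ ⟨g, hgI, hg, rfl⟩ hlt

theorem IsIdempotentRich.isSemisimpleRing [IsNoetherianRing R] (h : IsIdempotentRich R) :
    IsSemisimpleRing R := by
  refine (isSemisimpleModule_iff R R).2 ⟨fun I => ?_⟩
  obtain ⟨e, he, rfl⟩ := h.exists_isIdempotentElem_span_eq I
  exact ⟨_, isCompl_span_of_isIdempotentElem he⟩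

theorem isIdempotentRich_quotient_jacobson_iff :
    IsIdempotentRich (R ⧸ Ring.jacobson R) ↔
      ∀ y ∉ Ring.jacobson R, ∃ w ∉ Ring.jacobson R, w * y * w - w ∈ Ring.jacobson R := by
  simp only [IsIdempotentRich, Ideal.Quotient.mk_surjective.forall,
    Ideal.Quotient.mk_surjective.exists, ne_eq, Ideal.Quotient.eq_zero_iff_mem, ← map_mul,
    Ideal.Quotient.mk_eq_mk_iff_sub_mem]

theorem isIdempotentRich_quotient_jacobson_of_op
    (h : IsIdempotentRich (Rᵐᵒᵖ ⧸ Ring.jacobson Rᵐᵒᵖ)) :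
    IsIdempotentRich (R ⧸ Ring.jacobson R) := by
  rw [isIdempotentRich_quotient_jacobson_iff] at h ⊢
  intro y hy
  obtain ⟨w, hw, hwy⟩ := h (op y) (op_mem_jacobson_iff.not.2 hy)
  refine ⟨unop w, op_mem_jacobson_iff.not.1 hw, op_mem_jacobson_iff.1 ?_⟩
  simpa [mul_assoc] using hwy

theorem isIdempotentRich_of_forall_exists_mul_mul_self (h : ∀ y : R, ∃ x, y * x * y = y) :
    IsIdempotentRich R := by
  refine isIdempotentRich_iff_exists_isIdempotentElem.2 fun y hy => ?_
  obtain ⟨x, hx⟩ := h y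
  refine ⟨x, fun h0 => hy (by rw [← hx, mul_assoc, h0, mul_zero]), ?_⟩
  rw [IsIdempotentElem, mul_assoc, ← mul_assoc y, hx]

theorem semiregular_iff_forall_quotient :
    Semiregular R ↔ ∀ y : R ⧸ Ring.jacobson R, ∃ x, y * x * y = y := by
  simp only [Semiregular, Ideal.jacobson_bot, Ideal.Quotient.mk_surjective.forall,
    Ideal.Quotient.mk_surjective.exists, ← map_mul]
  simp only [← Ideal.Quotient.mk_eq_mk_iff_sub_mem, Eq.comm]

theorem Semiregular.isIdempotentRich_quotient_jacobson (h : Semiregular R) :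
    IsIdempotentRich (R ⧸ Ring.jacobson R) :=
  isIdempotentRich_of_forall_exists_mul_mul_self (semiregular_iff_forall_quotient.1 h)

theorem exists_isCompl_of_isAtom {M : Type*} [AddCommGroup M] [Module R M]
    (hM : Module.jacobson R M = ⊥) {K : Submodule R M} (hK : IsAtom K) : ∃ N, IsCompl K N := by
  obtain ⟨N, hN, hKN⟩ : ∃ N : Submodule R M, IsCoatom N ∧ ¬ K ≤ N := by
    by_contra! hle
    exact hK.1 (le_bot_iff.1 (hM ▸ le_sInf hle))
  exact ⟨N, hK.not_le_iff_disjoint.1 hKN, (hN.not_le_iff_codisjoint.1 hKN).symm⟩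

theorem isIdempotentRich_quotient_jacobson_of_isAtomic
    [IsAtomic (Submodule R (R ⧸ Ring.jacobson R))] : IsIdempotentRich (R ⧸ Ring.jacobson R) := by
  refine isIdempotentRich_iff_exists_isIdempotentElem.2 fun y hy => ?_
  have hmk : ∀ (a : R) (x : R ⧸ Ring.jacobson R), a • x = Ideal.Quotient.mk _ a * x :=
    fun a => Ideal.Quotient.mk_surjective.forall.2 fun _ => rfl
  obtain ⟨K, hK, hKy⟩ := (eq_bot_or_exists_atom_le (Submodule.span R {y})).resolve_left
    (Submodule.span_singleton_eq_bot.not.2 hy)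
  obtain ⟨N, hN⟩ := exists_isCompl_of_isAtom (Module.jacobson_quotient_jacobson R R) hK
  obtain ⟨e, he, n, hn, hen⟩ := Submodule.mem_sup.1 (hN.sup_eq_top ▸ Submodule.mem_top (x := 1))
  obtain ⟨z, hz⟩ := Submodule.mem_span_singleton.1 (hKy he)
  refine ⟨Ideal.Quotient.mk _ z, ?_⟩
  rw [← hmk, hz]
  obtain ⟨a, rfl⟩ := Ideal.Quotient.mk_surjective e
  have han : a • n = Ideal.Quotient.mk _ a - a • Ideal.Quotient.mk _ a := by
    rw [eq_sub_of_add_eq' hen, smul_sub, hmk, mul_one]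
  have han0 : a • n = 0 := Submodule.disjoint_def.1 hN.disjoint _
    (han ▸ sub_mem he (K.smul_mem a he)) (N.smul_mem a hn)
  refine ⟨fun h0 => hK.1 ?_, (sub_eq_zero.1 (han ▸ han0)).symm⟩
  rw [h0, zero_add] at hen
  have hN_top : N = ⊤ := eq_top_iff.2 fun x _ => by
    obtain ⟨b, rfl⟩ := Ideal.Quotient.mk_surjective x
    simpa only [hmk, hen, mul_one] using N.smul_mem b hn
  exact eq_bot_of_isCompl_top (hN_top ▸ hN)

end IdempotentRich

section FGF

variable {R : Type u} [Ring R]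

theorem mul_apply_one (g : R →ₗ[R] R) (a : R) : a * g 1 = g a := by
  rw [← smul_eq_mul, ← map_smul, smul_eq_mul, mul_one]

theorem LeftFGF.exists_linearMap_ne_zero (h : LeftFGF R) {M : Type u} [AddCommGroup M] [Module R M]
    [Module.Finite R M] {x : M} (hx : x ≠ 0) : ∃ φ : M →ₗ[R] R, φ x ≠ 0 := by
  obtain ⟨ι, f, hf⟩ := h M inferInstance
  obtain ⟨i, hi⟩ := Finsupp.ne_iff.1 ((map_ne_zero_iff f hf).2 hx)
  exact ⟨Finsupp.lapply i ∘ₗ f, hi⟩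

theorem LeftFGF.exists_mul_eq_zero_and_mul_ne_zero (h : LeftFGF R) {I : Ideal R} {x : R}
    (hx : x ∉ I) : ∃ y, (∀ a ∈ I, a * y = 0) ∧ x * y ≠ 0 := by
  obtain ⟨φ, hφ⟩ := h.exists_linearMap_ne_zero ((Submodule.Quotient.mk_eq_zero I).not.2 hx)
  refine ⟨(φ ∘ₗ I.mkQ) 1, fun a ha => ?_, (mul_apply_one _ x).trans_ne hφ⟩
  rw [mul_apply_one, LinearMap.comp_apply, Submodule.mkQ_apply,
    (Submodule.Quotient.mk_eq_zero I).2 ha, map_zero]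

/-- The right annihilators of the powers of `J` ascend, and `J ^ n` is recovered from its right
annihilator, so that `J ^ n = J * J ^ n` for some `n`. -/
theorem LeftFGF.isNilpotent_jacobson [IsNoetherianRing R] (h : LeftFGF R) :
    IsNilpotent (Ring.jacobson R) := by
  set J := Ring.jacobson R
  let A : ℕ →o Submodule R R :=
    { toFun := fun k =>
        { carrier := rAnn R (J ^ k : Ideal R)
          add_mem' := fun hx hy a ha => by rw [mul_add, hx a ha, hy a ha, add_zero]
          zero_mem' := fun a _ => mul_zero a
          smul_mem' := fun c x hx a ha => by
            rw [smul_eq_mul, ← mul_assoc]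
            exact hx _ (Ideal.mul_mem_right _ _ ha) }
      monotone' := fun m n hmn y hy a ha => hy a (Ideal.pow_le_pow_right hmn ha) }
  obtain ⟨n, hn⟩ := monotone_stabilizes_iff_noetherian.2 ‹_› A
  have hle : J ^ n ≤ J ^ (n + 1) := fun x hx => by
    by_contra hx'
    obtain ⟨y, hy, hxy⟩ := h.exists_mul_eq_zero_and_mul_ne_zero hx'
    have hyn : y ∈ A n := hn (n + 1) n.le_succ ▸ hy
    exact hxy (hyn x hx)
  rw [Ideal.IsTwoSided.pow_succ] at hle
  exact ⟨n, Submodule.FG.eq_bot_of_le_jacobson_smul (IsNoetherian.noetherian _) hle⟩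

theorem LeftFGF.isSemiprimaryRing [IsNoetherianRing R] (h : LeftFGF R)
    (hR : IsIdempotentRich (R ⧸ Ring.jacobson R)) : IsSemiprimaryRing R :=
  have := isNoetherianRing_of_surjective R _ _ (Ideal.Quotient.mk_surjective (I := Ring.jacobson R))
  ⟨hR.isSemisimpleRing, h.isNilpotent_jacobson⟩

end FGF

section Kasch

theorem isSemisimpleModule_quotient_iInf {R M ι : Type*} [Ring R] [AddCommGroup M] [Module R M]
    [Finite ι] {K : ι → Submodule R M} (hK : ∀ i, IsCoatom (K i)) :
    IsSemisimpleModule R (M ⧸ ⨅ i, K i) := by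
  have (i : ι) : IsSimpleModule R (M ⧸ K i) := isSimpleModule_iff_isCoatom.2 (hK i)
  let f : M →ₗ[R] Π i, M ⧸ K i := LinearMap.pi fun i => (K i).mkQ
  have hf : ⨅ i, K i = LinearMap.ker f := by simp only [f, LinearMap.ker_pi, Submodule.ker_mkQ]
  exact IsSemisimpleModule.of_injective ((⨅ i, K i).liftQ f hf.le)
    (LinearMap.ker_eq_bot.1 (Submodule.ker_liftQ_eq_bot _ _ _ hf.ge))

variable {R : Type u} [Ring R]

theorem RightKasch.exists_eq_ker_toSpanSingleton (h : RightKasch R) {K : Ideal Rᵐᵒᵖ}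
    (hK : IsCoatom K) : ∃ a : R, K = LinearMap.ker (LinearMap.toSpanSingleton Rᵐᵒᵖ R a) := by
  obtain ⟨f, hf⟩ :=
    h (Rᵐᵒᵖ ⧸ K) (cyclicModule_quotient K) (Submodule.Quotient.nontrivial_iff.2 hK.1)
  have hfK : f ∘ₗ K.mkQ = LinearMap.toSpanSingleton Rᵐᵒᵖ R (f (K.mkQ 1)) :=
    LinearMap.ext_ring (by simp)
  refine ⟨f (K.mkQ 1), hfK ▸ ((hK.le_iff_eq fun h0 => hf ?_).1 ?_).symm⟩
  · exact (LinearMap.cancel_right K.mkQ_surjective).1 (LinearMap.ker_eq_top.1 h0)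
  · exact (Submodule.ker_mkQ K).ge.trans (LinearMap.ker_le_ker_comp _ _)

/-- The maximal right ideals are right annihilators of elements, and finitely many of these elements
generate the same left ideal as all of them. -/
theorem RightKasch.isSemisimpleModule_quotient_jacobson [IsNoetherianRing R] (h : RightKasch R) :
    IsSemisimpleModule Rᵐᵒᵖ (Rᵐᵒᵖ ⧸ Ring.jacobson Rᵐᵒᵖ) := by
  let A : Set R := {a | IsCoatom (LinearMap.ker (LinearMap.toSpanSingleton Rᵐᵒᵖ R a))}
  obtain ⟨s, hsA, hs⟩ := (Submodule.fg_span_iff_fg_span_finset_subset A).1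
    (IsNoetherian.noetherian (Submodule.span R A))
  have hJ : Ring.jacobson Rᵐᵒᵖ =
      ⨅ a : s, LinearMap.ker (LinearMap.toSpanSingleton Rᵐᵒᵖ R (a : R)) := by
    refine le_antisymm (le_iInf fun a => sInf_le (hsA a.2)) (le_sInf fun K hK x hx => ?_)
    obtain ⟨a, rfl⟩ := h.exists_eq_ker_toSpanSingleton hK
    have hle : Submodule.span R (s : Set R) ≤
        LinearMap.ker (LinearMap.toSpanSingleton R R (unop x)) :=
      Submodule.span_le.2 fun b hb => Submodule.mem_iInf _ |>.1 hx ⟨b, hb⟩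
    exact hle (hs ▸ Submodule.subset_span hK)
  rw [hJ]
  exact isSemisimpleModule_quotient_iInf fun a => hsA a.2

theorem RightKasch.isIdempotentRich_quotient_jacobson [IsNoetherianRing R] (h : RightKasch R) :
    IsIdempotentRich (R ⧸ Ring.jacobson R) := by
  have := h.isSemisimpleModule_quotient_jacobson
  exact isIdempotentRich_quotient_jacobson_of_op isIdempotentRich_quotient_jacobson_of_isAtomic

end Kasch

section Socle

variable {R : Type u} [Ring R]

theorem isAtomic_submodule_of_forall_exists_le {M : Type*} [AddCommGroup M] [Module R M]
    (h : ∀ P : Submodule R M, P ≠ ⊥ → ∃ N ≤ P, ∃ T : Submodule R N, IsAtom T) :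
    IsAtomic (Submodule R M) where
  eq_bot_or_exists_atom_le P := or_iff_not_imp_left.2 fun hP =>
    have ⟨N, hNP, T, hT⟩ := h P hP
    ⟨N.mapIic T, ((OrderIso.isAtom_iff _ T).2 hT).of_isAtom_coe_Iic, (N.mapIic T).2.trans hNP⟩

theorem isAtomic_submodule_of_injective {M N : Type*} [AddCommGroup M] [Module R M]
    [AddCommGroup N] [Module R N] [IsAtomic (Submodule R M)] {f : N →ₗ[R] M} (hf : Injective f) :
    IsAtomic (Submodule R N) :=
  ((Submodule.orderIsoMapComap (LinearEquiv.ofInjective f hf)).trans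
    (LinearMap.range f).mapIic).isAtomic_iff.2 inferInstance

theorem isAtomic_submodule_finsupp (ι : Type*) {M : Type*} [AddCommGroup M] [Module R M]
    [IsAtomic (Submodule R M)] : IsAtomic (Submodule R (ι →₀ M)) := by
  refine isAtomic_submodule_of_forall_exists_le fun P hP => ?_
  obtain ⟨m, ⟨hmP, hm⟩, hmin⟩ := exists_minimalFor_of_wellFoundedLT
    (fun m : ι →₀ M => m ∈ P ∧ m ≠ 0) Finsupp.support (P.ne_bot_iff.1 hP)
  obtain ⟨i, hi⟩ := Finsupp.ne_iff.1 hm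
  have hinj : Injective (Finsupp.lapply i ∘ₗ (Submodule.span R {m}).subtype) := by
    refine LinearMap.ker_eq_bot.1 (LinearMap.ker_eq_bot'.2 fun x (hx : x.1 i = 0) => ?_)
    obtain ⟨s, hs⟩ := Submodule.mem_span_singleton.1 x.2
    by_contra hx0
    exact Finsupp.mem_support_iff.1 (hmin ⟨hs ▸ P.smul_mem s hmP, Subtype.coe_ne_coe.2 hx0⟩
      (hs ▸ Finsupp.support_smul) (Finsupp.mem_support_iff.2 hi)) hx
  have := isAtomic_submodule_of_injective hinj
  have := Submodule.nontrivial_span_singleton (R := R) hm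
  exact ⟨_, (Submodule.span_singleton_le_iff_mem m P).2 hmP, IsAtomic.exists_atom _⟩

variable {M : Type u} [AddCommGroup M] [Module R M]

theorem socle_ne_bot_iff : socle R M ≠ ⊥ ↔ ∃ T : Submodule R M, IsAtom T := by
  refine ⟨fun h => ?_, fun ⟨T, hT⟩ => ?_⟩
  · by_contra! hT
    exact h (sSup_eq_bot.2 fun T hS => (hT T (isSimpleModule_iff_isAtom.1 hS)).elim)
  · exact (hT.bot_lt.trans_le (le_sSup (isSimpleModule_iff_isAtom.2 hT))).ne'

instance isSemisimpleModule_socle : IsSemisimpleModule R (socle R M) := by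
  rw [socle, sSup_eq_iSup]
  exact isSemisimpleModule_biSup_of_isSemisimpleModule_submodule fun T hT =>
    have : IsSimpleModule R T := hT
    inferInstance

theorem essentialSub_socle_iff_isAtomic :
    EssentialSub R (socle R M) ↔ IsAtomic (Submodule R M) := by
  refine ⟨fun h => isAtomic_submodule_of_forall_exists_le fun P hP => ?_, fun h P hP => ?_⟩
  · have := IsSemisimpleModule.of_injective
      (Submodule.inclusion (inf_le_left (a := socle R M) (b := P)))
      (Submodule.inclusion_injective _)
    have := Submodule.nontrivial_iff_ne_bot.2 (h P hP)
    exact ⟨_, inf_le_right, IsAtomic.exists_atom (Submodule R ↥(socle R M ⊓ P))⟩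
  · obtain ⟨T, hT, hTP⟩ := (eq_bot_or_exists_atom_le P).resolve_left hP
    exact (hT.bot_lt.trans_le (le_inf (le_sSup (isSimpleModule_iff_isAtom.2 hT)) hTP)).ne'

theorem LeftSemiartinian.isAtomic_submodule (h : LeftSemiartinian R) :
    IsAtomic (Submodule R M) := by
  refine isAtomic_submodule_of_forall_exists_le fun P hP => ?_
  obtain ⟨m, hmP, hm⟩ := P.ne_bot_iff.1 hP
  exact ⟨_, (Submodule.span_singleton_le_iff_mem m P).2 hmP, socle_ne_bot_iff.1
    (h _ (cyclicModule_span_singleton m) (Submodule.nontrivial_span_singleton hm))⟩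

theorem LeftSemiartinian.isIdempotentRich_quotient_jacobson (h : LeftSemiartinian R) :
    IsIdempotentRich (R ⧸ Ring.jacobson R) :=
  have := h.isAtomic_submodule (M := R ⧸ Ring.jacobson R)
  isIdempotentRich_quotient_jacobson_of_isAtomic

theorem LeftFGF.leftSemiartinian_of_isAtomic (h : LeftFGF R) [IsAtomic (Submodule R R)] :
    LeftSemiartinian R := by
  rintro M _ _ ⟨m, hm⟩ hM
  obtain ⟨ι, f, hf⟩ := h M ⟨⟨{m}, by simpa using hm⟩⟩
  have := isAtomic_submodule_finsupp (R := R) ι (M := R)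
  have := isAtomic_submodule_of_injective hf
  exact socle_ne_bot_iff.2 (IsAtomic.exists_atom _)

end Socle

section Injective

variable {R : Type u} [Ring R]

theorem EssentialSub.eq_bot_of_disjoint {M : Type u} [AddCommGroup M] [Module R M]
    {N P : Submodule R M} (hN : EssentialSub R N) (h : Disjoint N P) : P = ⊥ :=
  of_not_not fun hP => hN P hP h.eq_bot

theorem EssentialSub.mono {M : Type u} [AddCommGroup M] [Module R M] {N N' : Submodule R M}
    (hN : EssentialSub R N) (h : N ≤ N') : EssentialSub R N' :=
  fun P hP hN'P => hN P hP (le_bot_iff.1 (hN'P ▸ inf_le_inf_right P h))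

theorem exists_maximal_disjoint {M : Type*} [AddCommGroup M] [Module R M] (N : Submodule R M) :
    ∃ L : Submodule R M, Maximal (Disjoint N) L := by
  obtain ⟨L, -, hL⟩ := zorn_le_nonempty₀ {L : Submodule R M | Disjoint N L}
    (fun c hc hchain _ _ => ⟨sSup c, hchain.directedOn.disjoint_sSup_right.2 fun _ h => hc h,
      fun _ => le_sSup⟩) ⊥ disjoint_bot_right
  exact ⟨L, hL⟩

theorem essentialSub_sup_of_maximal_disjoint {M : Type u} [AddCommGroup M] [Module R M]
    {N L : Submodule R M} (hL : Maximal (Disjoint N) L) : EssentialSub R (N ⊔ L) := by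
  refine fun P hP h => hP ?_
  have hle : P ≤ L := le_sup_right.trans (hL.le_of_ge
    (hL.prop.disjoint_sup_right_of_disjoint_sup_left (disjoint_iff.2 h)) le_sup_left)
  rwa [inf_eq_right.2 (hle.trans le_sup_right)] at h

theorem exists_comp_eq_of_ker_le_ker {M N : Type*} {Q : Type u} [AddCommGroup M] [Module R M]
    [AddCommGroup N] [Module R N] [AddCommGroup Q] [Module R Q] [Module.Injective R Q]
    {i : M →ₗ[R] N} {j : M →ₗ[R] Q} (h : LinearMap.ker i ≤ LinearMap.ker j) :
    ∃ g : N →ₗ[R] Q, g ∘ₗ i = j := by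
  obtain ⟨g, hg⟩ := Module.Injective.extension_property R Q _ _ ((LinearMap.ker i).liftQ i le_rfl)
    (LinearMap.ker_eq_bot.1 (Submodule.ker_liftQ_eq_bot _ _ _ le_rfl))
    ((LinearMap.ker i).liftQ j h)
  exact ⟨g, LinearMap.ext fun x => LinearMap.congr_fun hg ((LinearMap.ker i).mkQ x)⟩

variable [Module.Injective R R]

theorem mem_jacobson_of_essentialSub_ker {a : R}
    (ha : EssentialSub R (LinearMap.ker (LinearMap.toSpanSingleton R R a))) :
    a ∈ Ring.jacobson R := by
  refine mem_jacobson_of_forall_mul_eq_one fun r => ?_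
  have hker : LinearMap.ker (LinearMap.toSpanSingleton R R (1 - a * r)) = ⊥ := by
    refine ha.eq_bot_of_disjoint (Submodule.disjoint_def.2 fun x hxa hx => ?_)
    simp only [LinearMap.mem_ker, LinearMap.toSpanSingleton_apply, smul_eq_mul] at hxa hx
    rwa [mul_sub, mul_one, ← mul_assoc, hxa, zero_mul, sub_zero] at hx
  obtain ⟨g, hg⟩ := exists_comp_eq_of_ker_le_ker (j := LinearMap.id) (hker.trans_le bot_le)
  exact ⟨g 1, by simpa [mul_apply_one] using LinearMap.congr_fun hg 1⟩

/-- Right multiplication by `y` is injective on a complement `L` of its kernel; extending its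
inverse to `R` yields `z` such that `y - y * z * y` annihilates both `L` and the kernel. -/
theorem semiregular_of_injective : Semiregular R := by
  intro y
  set K := LinearMap.ker (LinearMap.toSpanSingleton R R y)
  obtain ⟨L, hL⟩ := exists_maximal_disjoint K
  have hker : LinearMap.ker (LinearMap.toSpanSingleton R R y ∘ₗ L.subtype) = ⊥ :=
    LinearMap.ker_eq_bot'.2 fun l hl =>
      Subtype.ext (Submodule.disjoint_def.1 hL.prop l (LinearMap.mem_ker.2 hl) l.2)
  obtain ⟨g, hg⟩ := exists_comp_eq_of_ker_le_ker (j := L.subtype) (hker.trans_le bot_le)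
  have hgL : ∀ l ∈ L, l * y * g 1 = l := fun l hl => by
    simpa [mul_apply_one] using LinearMap.congr_fun hg ⟨l, hl⟩
  refine ⟨g 1, Ideal.jacobson_bot.ge (mem_jacobson_of_essentialSub_ker ?_)⟩
  refine (essentialSub_sup_of_maximal_disjoint hL).mono (sup_le (fun k hk => ?_) fun l hl => ?_)
  · have hky : k * y = 0 := hk
    simp [mul_sub, ← mul_assoc, hky]
  · simp [mul_sub, ← mul_assoc, hgL l hl]

end Injective

section Bimodule

/-- Every quotient of a finite power of the `S`-module `Q` is cogenerated by `Q`. -/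
def CogeneratesFinitePowers (S Q : Type*) [Ring S] [AddCommGroup Q] [Module S Q] : Prop :=
  ∀ (n : ℕ) (N : Submodule S (Fin n → Q)) (x : (Fin n → Q) ⧸ N), x ≠ 0 →
    ∃ φ : ((Fin n → Q) ⧸ N) →ₗ[S] Q, φ x ≠ 0

variable {S T Q : Type*} [Ring S] [Ring T] [AddCommGroup Q] [Module S Q] [Module T Q]
  [SMulCommClass T S Q]

theorem CogeneratesFinitePowers.exists_eq_smul (hQ : CogeneratesFinitePowers S Q)
    (hend : ∀ g : Q →ₗ[S] Q, ∃ t : T, ∀ x, g x = t • x) {K : Type*} [AddCommGroup K] [Module T K]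
    [Module.Finite T K] {i f : K →ₗ[T] Q} (hif : LinearMap.ker i ≤ LinearMap.ker f) :
    ∃ s : S, f = s • i := by
  obtain ⟨n, k, hk⟩ := Module.Finite.exists_fin (R := T) (M := K)
  suffices f ∘ k ∈ Submodule.span S {i ∘ k} by
    obtain ⟨s, hs⟩ := Submodule.mem_span_singleton.1 this
    exact ⟨s, LinearMap.ext_on_range hk fun j => (congrFun hs j).symm⟩
  by_contra hw
  set N := Submodule.span S {i ∘ k}
  obtain ⟨φ, hφ⟩ := hQ n N (N.mkQ (f ∘ k)) ((Submodule.Quotient.mk_eq_zero N).not.2 hw)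
  choose t ht using fun j => hend (φ ∘ₗ N.mkQ ∘ₗ LinearMap.single S (fun _ => Q) j)
  have hφt (g : K →ₗ[T] Q) : φ (N.mkQ (g ∘ k)) = g (∑ j, t j • k j) := by
    rw [← LinearMap.sum_single_apply (fun _ => Q) (g ∘ k), map_sum, map_sum, map_sum]
    exact Finset.sum_congr rfl fun j _ => (ht j _).trans (map_smul g _ _).symm
  refine hφ ((hφt f).trans (hif ((hφt i).symm.trans ?_)))
  rw [Submodule.mkQ_apply,
    (Submodule.Quotient.mk_eq_zero N).2 (Submodule.mem_span_singleton_self _), map_zero]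

theorem CogeneratesFinitePowers.baer [IsNoetherianRing T] (hQ : CogeneratesFinitePowers S Q)
    (hend : ∀ g : Q →ₗ[S] Q, ∃ t : T, ∀ x, g x = t • x) {q : Q}
    (hq : Injective (LinearMap.toSpanSingleton T Q q)) : Module.Baer T Q := by
  intro I f
  have hinj : Injective (LinearMap.toSpanSingleton T Q q ∘ₗ I.subtype) :=
    hq.comp Subtype.val_injective
  obtain ⟨s, rfl⟩ := hQ.exists_eq_smul hend (f := f) ((LinearMap.ker_eq_bot.2 hinj).trans_le bot_le)
  exact ⟨s • LinearMap.toSpanSingleton T Q q, fun _ _ => rfl⟩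

end Bimodule

section Noetherian

variable {R : Type u} [Ring R]

theorem exists_op_smul_of_linearMap (g : R →ₗ[R] R) : ∃ t : Rᵐᵒᵖ, ∀ x, g x = t • x :=
  ⟨op (g 1), fun x => (mul_apply_one g x).symm⟩

theorem exists_smul_of_linearMap_op (g : R →ₗ[Rᵐᵒᵖ] R) : ∃ t : R, ∀ x, g x = t • x :=
  ⟨g 1, fun x => by rw [smul_eq_mul, ← op_smul_eq_mul, ← map_smul, op_smul_eq_mul, one_mul]⟩

theorem LeftFGF.cogeneratesFinitePowers (h : LeftFGF R) : CogeneratesFinitePowers R R :=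
  fun _ _ _ => h.exists_linearMap_ne_zero

theorem LeftFGF.exists_eq_smul (h : LeftFGF R) {K : Type*} [AddCommGroup K] [Module Rᵐᵒᵖ K]
    [Module.Finite Rᵐᵒᵖ K] {i f : K →ₗ[Rᵐᵒᵖ] R} (hif : LinearMap.ker i ≤ LinearMap.ker f) :
    ∃ a : R, f = a • i :=
  h.cogeneratesFinitePowers.exists_eq_smul exists_op_smul_of_linearMap hif

theorem isNoetherianRing_op [IsNoetherian Rᵐᵒᵖ R] : IsNoetherianRing Rᵐᵒᵖ :=
  isNoetherian_of_injective (LinearMap.toSpanSingleton Rᵐᵒᵖ R 1) fun x y hxy => by simpa using hxy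

theorem LeftFGF.injective_op (h : LeftFGF R) [IsNoetherian Rᵐᵒᵖ R] : Module.Injective Rᵐᵒᵖ R :=
  have := isNoetherianRing_op (R := R)
  (h.cogeneratesFinitePowers.baer exists_op_smul_of_linearMap (q := 1)
    fun x y hxy => by simpa using hxy).injective

theorem RightKasch.exists_linearMap_ne_zero (h : RightKasch R) [Module.Injective Rᵐᵒᵖ R]
    {M : Type u} [AddCommGroup M] [Module Rᵐᵒᵖ M] {x : M} (hx : x ≠ 0) :
    ∃ φ : M →ₗ[Rᵐᵒᵖ] R, φ x ≠ 0 := by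
  obtain ⟨g, hg⟩ := h _ (cyclicModule_span_singleton x) (Submodule.nontrivial_span_singleton hx)
  obtain ⟨φ, rfl⟩ := Module.Injective.extension_property Rᵐᵒᵖ R _ _
    (Submodule.span Rᵐᵒᵖ {x}).subtype Subtype.val_injective g
  exact ⟨φ, ne_zero_of_linearMap_span_singleton_ne_zero hg⟩

theorem RightKasch.cogeneratesFinitePowers (h : RightKasch R) [Module.Injective Rᵐᵒᵖ R] :
    CogeneratesFinitePowers Rᵐᵒᵖ R :=
  fun _ _ _ => h.exists_linearMap_ne_zero

theorem RightKasch.injective [IsNoetherianRing R] (h : RightKasch R) [Module.Injective Rᵐᵒᵖ R] :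
    Module.Injective R R :=
  (h.cogeneratesFinitePowers.baer exists_smul_of_linearMap_op (q := 1)
    fun x y hxy => by simpa using hxy).injective

end Noetherian

section RightNoetherian

variable {R : Type u} [Ring R]

/-- The left annihilator `lAnn R X` as a left ideal. -/
def leftAnnihilator (X : Set R) : Ideal R where
  carrier := lAnn R X
  add_mem' ha hb x hx := by rw [add_mul, ha x hx, hb x hx, add_zero]
  zero_mem' x _ := zero_mul x
  smul_mem' c a ha x hx := by rw [smul_eq_mul, mul_assoc, ha x hx, mul_zero]

/-- `R` has a map `K ⊔ y R → R` that vanishes on `K` but not at `y`, as it is right Kasch, and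
this map is a left multiplication. -/
theorem LeftFGF.exists_mem_leftAnnihilator (h : LeftFGF R) (hR : RightKasch R)
    {K : Submodule Rᵐᵒᵖ R} (hK : K.FG) {y : R} (hy : y ∉ K) :
    ∃ a ∈ leftAnnihilator (K : Set R), a * y ≠ 0 := by
  set C := Submodule.span Rᵐᵒᵖ {K.mkQ y}
  obtain ⟨g, hg⟩ := hR C (cyclicModule_span_singleton _)
    (Submodule.nontrivial_span_singleton ((Submodule.Quotient.mk_eq_zero K).not.2 hy))
  set K' := K ⊔ Submodule.span Rᵐᵒᵖ {y}
  have hyK' : y ∈ K' := Submodule.mem_sup_right (Submodule.mem_span_singleton_self y)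
  have hmaps : K' ≤ C.comap K.mkQ := sup_le
    ((Submodule.ker_mkQ K).ge.trans (Submodule.comap_mono bot_le))
    ((Submodule.span_singleton_le_iff_mem y _).2 (Submodule.mem_span_singleton_self _))
  have : Module.Finite Rᵐᵒᵖ K' := .of_fg (hK.sup (Submodule.fg_span_singleton y))
  obtain ⟨a, ha⟩ := h.exists_eq_smul (i := K'.subtype) (f := g ∘ₗ K.mkQ.restrict hmaps)
    (by rw [Submodule.ker_subtype]; exact bot_le)
  have hg_apply (x : R) (hx : x ∈ K') : a * x = g ⟨K.mkQ x, hmaps hx⟩ :=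
    (LinearMap.congr_fun ha ⟨x, hx⟩).symm
  refine ⟨a, fun x hx => ?_, ?_⟩
  · rw [hg_apply x (Submodule.mem_sup_left hx), ← map_zero g]
    exact congrArg g (Subtype.ext ((Submodule.Quotient.mk_eq_zero K).2 hx))
  · exact (hg_apply y hyK').trans_ne (ne_zero_of_linearMap_span_singleton_ne_zero hg)

theorem LeftFGF.isNoetherian_op (h : LeftFGF R) [IsArtinianRing R] (hR : RightKasch R) :
    IsNoetherian Rᵐᵒᵖ R := by
  refine ⟨fun I => ?_⟩
  obtain ⟨_, ⟨K, ⟨hKI, hK⟩, rfl⟩, hmin⟩ := IsArtinian.set_has_minimal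
    ((fun K : Submodule Rᵐᵒᵖ R => leftAnnihilator (K : Set R)) '' {K | K ≤ I ∧ K.FG})
    ⟨_, ⊥, ⟨bot_le, Submodule.fg_bot⟩, rfl⟩
  suffices I ≤ K from le_antisymm hKI this ▸ hK
  intro y hy
  by_contra hyK
  obtain ⟨a, haK, hay⟩ := h.exists_mem_leftAnnihilator hR hK hyK
  refine hmin _ ⟨K ⊔ Submodule.span Rᵐᵒᵖ {y}, ⟨?_, ?_⟩, rfl⟩ (SetLike.lt_iff_le_and_exists.2
    ⟨fun b hb x hx => hb x (Submodule.mem_sup_left hx), a, haK, fun ha => hay (ha y ?_)⟩)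
  · exact sup_le hKI ((Submodule.span_singleton_le_iff_mem y I).2 hy)
  · exact hK.sup (Submodule.fg_span_singleton y)
  · exact Submodule.mem_sup_right (Submodule.mem_span_singleton_self y)

end RightNoetherian

section SimpleModules

variable {S : Type*} [Ring S]

theorem exists_nonempty_linearEquiv_of_finite_isotypicComponents {M : Type*} [AddCommGroup M]
    [Module S M] [Finite (isotypicComponents S M)]
    (σ : {U : Submodule S M // IsSimpleModule S U} → {U : Submodule S M // IsSimpleModule S U})
    (hσ : ∀ U V, Nonempty ((σ U).1 ≃ₗ[S] (σ V).1) → Nonempty (U.1 ≃ₗ[S] V.1))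
    (T : Submodule S M) [IsSimpleModule S T] : ∃ U, Nonempty ((σ U).1 ≃ₗ[S] T) := by
  have hiso (U V : Submodule S M) [IsSimpleModule S U] [IsSimpleModule S V]
      (h : isotypicComponent S M U = isotypicComponent S M V) : Nonempty (U ≃ₗ[S] V) :=
    isIsotypicOfType_submodule_iff.1 (.isotypicComponent S M V) U (h ▸ U.le_isotypicComponent)
  choose U hU hcU using fun c : isotypicComponents S M => c.2
  let F (c : isotypicComponents S M) : isotypicComponents S M :=
    ⟨isotypicComponent S M (σ ⟨U c, hU c⟩).1, _, (σ ⟨U c, hU c⟩).2, rfl⟩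
  have hσU (c) : IsSimpleModule S (σ ⟨U c, hU c⟩).1 := (σ ⟨U c, hU c⟩).2
  have hF : Injective F := fun c d hcd => by
    obtain ⟨e⟩ := hσ _ _ (hiso _ _ (Subtype.ext_iff.1 hcd))
    exact Subtype.ext ((hcU c).trans (e.isotypicComponent_eq.trans (hcU d).symm))
  obtain ⟨c, hc⟩ := Finite.surjective_of_injective hF ⟨isotypicComponent S M T, T, ‹_›, rfl⟩
  exact ⟨⟨U c, hU c⟩, hiso _ _ (Subtype.ext_iff.1 hc)⟩

theorem jacobson_le_ker_toSpanSingleton {M : Type*} [AddCommGroup M] [Module S M]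
    [IsSemisimpleModule S M] (m : M) :
    Ring.jacobson S ≤ LinearMap.ker (LinearMap.toSpanSingleton S M m) :=
  fun _ hx => Module.mem_annihilator.1 (IsSemisimpleModule.jacobson_le_annihilator S M hx) m

variable [IsSemisimpleModule S (S ⧸ Ring.jacobson S)]

theorem exists_linearMap_quotient_jacobson_section {W : Type*} [AddCommGroup W] [Module S W]
    [IsSimpleModule S W] {w : W} (hw : w ≠ 0) :
    ∃ σ : W →ₗ[S] S ⧸ Ring.jacobson S, ∀ x : W, ∀ s, σ x = Ideal.Quotient.mk _ s → s • w = x := by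
  let π := (Ring.jacobson S).liftQ _ (jacobson_le_ker_toSpanSingleton w)
  have hπ : Surjective π := (LinearMap.surjective_or_eq_zero π).resolve_right fun h0 =>
    hw ((one_smul S w).symm.trans (LinearMap.congr_fun h0 (Ideal.Quotient.mk _ 1)))
  obtain ⟨σ, hσ⟩ := IsSemisimpleModule.lifting_property π hπ LinearMap.id
  exact ⟨σ, fun x s hs => (congrArg π hs).symm.trans (LinearMap.congr_fun hσ x)⟩

theorem exists_submodule_quotient_jacobson_linearEquiv (W : Type*) [AddCommGroup W] [Module S W]
    [IsSimpleModule S W] :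
    ∃ T : Submodule S (S ⧸ Ring.jacobson S), Nonempty (T ≃ₗ[S] W) := by
  have := IsSimpleModule.nontrivial S W
  obtain ⟨w, hw⟩ := exists_ne (0 : W)
  obtain ⟨σ, hσ⟩ := exists_linearMap_quotient_jacobson_section (S := S) hw
  refine ⟨_, ⟨(LinearEquiv.ofInjective σ (LinearMap.injective_of_ne_zero fun h0 => hw ?_)).symm⟩⟩
  rw [← hσ w 0 (by rw [h0, map_zero]; rfl), zero_smul]

theorem nonempty_linearEquiv_of_annihilator_le {U W : Type*} [AddCommGroup U] [Module S U]
    [IsSimpleModule S U] [AddCommGroup W] [Module S W] [IsSimpleModule S W]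
    (h : Module.annihilator S U ≤ Module.annihilator S W) : Nonempty (W ≃ₗ[S] U) := by
  have := IsSimpleModule.nontrivial S W
  obtain ⟨w, hw⟩ := exists_ne (0 : W)
  obtain ⟨σ, hσ⟩ := exists_linearMap_quotient_jacobson_section (S := S) hw
  obtain ⟨s, hs⟩ := Ideal.Quotient.mk_surjective (σ w)
  have hsU : s ∉ Module.annihilator S U := fun hsU => hw
    ((hσ w s hs.symm).symm.trans (Module.mem_annihilator.1 (h hsU) w))
  obtain ⟨u, hu⟩ : ∃ u : U, s • u ≠ 0 := by simpa [Module.mem_annihilator] using hsU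
  let τ := (Ring.jacobson S).liftQ _ (jacobson_le_ker_toSpanSingleton u) ∘ₗ σ
  refine ⟨.ofBijective τ (LinearMap.bijective_of_ne_zero fun h0 => hu ?_)⟩
  exact (congrArg _ hs).trans (LinearMap.congr_fun h0 w)

theorem nonempty_linearEquiv_of_annihilator_sup_ne_top {U V : Type*} [AddCommGroup U] [Module S U]
    [IsSimpleModule S U] [AddCommGroup V] [Module S V] [IsSimpleModule S V]
    (h : Module.annihilator S U ⊔ Module.annihilator S V ≠ ⊤) : Nonempty (U ≃ₗ[S] V) := by
  obtain ⟨m, hm, hle⟩ := (eq_top_or_exists_le_coatom _).resolve_left h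
  have : IsSimpleModule S (S ⧸ m) := isSimpleModule_iff_isCoatom.2 hm
  have hann (I : Ideal S) [I.IsTwoSided] (hI : I ≤ m) : I ≤ Module.annihilator S (S ⧸ m) :=
    fun x hx => Module.mem_annihilator.2 <| m.mkQ_surjective.forall.2 fun s =>
      (Submodule.Quotient.mk_eq_zero m).2 (hI (I.mul_mem_right s hx))
  obtain ⟨e⟩ := nonempty_linearEquiv_of_annihilator_le (hann _ (le_sup_left.trans hle))
  obtain ⟨e'⟩ := nonempty_linearEquiv_of_annihilator_le (hann _ (le_sup_right.trans hle))
  exact ⟨e.symm.trans e'⟩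

end SimpleModules

section Semiprimary

variable {R : Type*} [Ring R] {M : Type*} [AddCommGroup M] [Module Rᵐᵒᵖ M]

theorem exists_mem_ne_zero_forall_op_smul_eq_zero {I : Ideal R} (hI : IsNilpotent I)
    {P : Submodule Rᵐᵒᵖ M} (hP : P ≠ ⊥) : ∃ x ∈ P, x ≠ 0 ∧ ∀ a ∈ I, op a • x = 0 := by
  obtain ⟨m, hmP, hm⟩ := P.ne_bot_iff.1 hP
  have h0 : ¬ ∀ a ∈ I ^ 0, op a • m = 0 := fun h =>
    hm ((one_smul Rᵐᵒᵖ m).symm.trans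
      (h 1 (((Submodule.pow_zero I).trans Ideal.one_eq_top).ge trivial)))
  have hex : ∃ n, ∀ a ∈ I ^ n, op a • m = 0 :=
    hI.imp fun n hn a ha => by rw [(Submodule.mem_bot R).1 (hn.le ha), op_zero, zero_smul]
  obtain ⟨n, hn, hn'⟩ := Nat.exists_not_and_succ_of_not_zero_of_exists h0 hex
  push Not at hn
  obtain ⟨a, ha, ham⟩ := hn
  refine ⟨op a • m, P.smul_mem _ hmP, ham, fun b hb => ?_⟩
  rw [← mul_smul, ← op_mul]
  exact hn' _ (Submodule.pow_succ (M := I) ▸ Ideal.mul_mem_mul ha hb)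

variable [IsSemisimpleRing (R ⧸ Ring.jacobson R)]

instance isSemisimpleModule_op_quotient_jacobson :
    IsSemisimpleModule Rᵐᵒᵖ (Rᵐᵒᵖ ⧸ Ring.jacobson Rᵐᵒᵖ) := by
  let f : R ⧸ Ring.jacobson R →+* (Rᵐᵒᵖ ⧸ Ring.jacobson Rᵐᵒᵖ)ᵐᵒᵖ :=
    Ideal.Quotient.lift _ ((Ideal.Quotient.mk (Ring.jacobson Rᵐᵒᵖ)).op.comp
      (RingEquiv.opOp R).toRingHom) fun x hx => unop_injective
        (Ideal.Quotient.eq_zero_iff_mem.2 (op_mem_jacobson_iff.2 hx))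
  have hf : Surjective f := Ideal.Quotient.lift_surjective_of_surjective _ _
    (op_surjective.comp Ideal.Quotient.mk_surjective |>.comp op_surjective)
  have := isSemisimpleRing_mulOpposite_iff.1 (f.isSemisimpleRing_of_surjective hf)
  have : RingHomSurjective (Ideal.Quotient.mk (Ring.jacobson Rᵐᵒᵖ)) :=
    ⟨Ideal.Quotient.mk_surjective⟩
  let e : (Rᵐᵒᵖ ⧸ Ring.jacobson Rᵐᵒᵖ) →ₛₗ[Ideal.Quotient.mk (Ring.jacobson Rᵐᵒᵖ)]
      (Rᵐᵒᵖ ⧸ Ring.jacobson Rᵐᵒᵖ) :=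
    { AddMonoidHom.id _ with
      map_smul' := fun _ => Ideal.Quotient.mk_surjective.forall.2 fun _ => rfl }
  exact (e.isSemisimpleModule_iff_of_bijective bijective_id).2 inferInstance

theorem isAtomic_submodule_op_of_isNilpotent_jacobson (h : IsNilpotent (Ring.jacobson R)) :
    IsAtomic (Submodule Rᵐᵒᵖ M) := by
  refine isAtomic_submodule_of_forall_exists_le fun P hP => ?_
  obtain ⟨x, hxP, hx, hJx⟩ := exists_mem_ne_zero_forall_op_smul_eq_zero h hP
  let f := (Ring.jacobson Rᵐᵒᵖ).liftQ (LinearMap.toSpanSingleton Rᵐᵒᵖ _ x) fun s hs =>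
    hJx _ (op_mem_jacobson_iff.1 hs)
  have : Nontrivial (LinearMap.range f) := Submodule.nontrivial_iff_ne_bot.2 fun h0 =>
    hx ((one_smul _ x).symm.trans (LinearMap.congr_fun (LinearMap.range_eq_bot.1 h0)
      (Ideal.Quotient.mk _ 1)))
  refine ⟨LinearMap.range f, ?_, IsAtomic.exists_atom _⟩
  rintro _ ⟨q, rfl⟩
  obtain ⟨s, rfl⟩ := Ideal.Quotient.mk_surjective q
  exact P.smul_mem s hxP

end Semiprimary

section SimpleCount

variable {R : Type u} [Ring R]

/-- The annihilator of a right `R`-module as an ideal of `R`. -/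
def annihilatorOp (R U : Type*) [Ring R] [AddCommGroup U] [Module Rᵐᵒᵖ U] : Ideal R where
  carrier := {p | op p ∈ Module.annihilator Rᵐᵒᵖ U}
  add_mem' hp hq := by simpa using add_mem hp hq
  zero_mem' := by simp
  smul_mem' c p hp := (Module.annihilator Rᵐᵒᵖ U).mul_mem_right (op c) hp

theorem LeftFGF.exists_isSimpleModule_annihilatorOp (h : LeftFGF R) [IsSemiprimaryRing R]
    (U : Type*) [AddCommGroup U] [Module Rᵐᵒᵖ U] [Nontrivial U] :
    ∃ B : Submodule Rᵐᵒᵖ R,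
      IsSimpleModule Rᵐᵒᵖ B ∧ ∀ p ∈ annihilatorOp R U, ∀ b ∈ B, p * b = 0 := by
  have h1 : 1 ∉ annihilatorOp R U := fun h1 => by
    obtain ⟨u, hu⟩ := exists_ne (0 : U)
    exact hu ((one_smul _ u).symm.trans (Module.mem_annihilator.1 h1 u))
  obtain ⟨y, hy, hy1⟩ := h.exists_mul_eq_zero_and_mul_ne_zero h1
  rw [one_mul] at hy1
  have := isAtomic_submodule_op_of_isNilpotent_jacobson (R := R) (M := R)
    IsSemiprimaryRing.isNilpotent
  obtain ⟨B, hB, hBy⟩ := (eq_bot_or_exists_atom_le (Submodule.span Rᵐᵒᵖ {y})).resolve_left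
    (Submodule.span_singleton_eq_bot.not.2 hy1)
  refine ⟨B, isSimpleModule_iff_isAtom.2 hB, fun p hp b hb => ?_⟩
  obtain ⟨r, rfl⟩ := Submodule.mem_span_singleton.1 (hBy hb)
  rw [← smul_eq_mul, smul_comm, smul_eq_mul, hy p hp, smul_zero]

theorem LeftFGF.nonempty_linearEquiv_of_annihilatorOp (h : LeftFGF R) [IsSemiprimaryRing R]
    {U V : Type*} [AddCommGroup U] [Module Rᵐᵒᵖ U] [IsSimpleModule Rᵐᵒᵖ U] [AddCommGroup V]
    [Module Rᵐᵒᵖ V] [IsSimpleModule Rᵐᵒᵖ V] {B C : Submodule Rᵐᵒᵖ R} [IsSimpleModule Rᵐᵒᵖ B]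
    (hB : ∀ p ∈ annihilatorOp R U, ∀ b ∈ B, p * b = 0)
    (hC : ∀ p ∈ annihilatorOp R V, ∀ c ∈ C, p * c = 0) (e : B ≃ₗ[Rᵐᵒᵖ] C) :
    Nonempty (U ≃ₗ[Rᵐᵒᵖ] V) := by
  refine nonempty_linearEquiv_of_annihilator_sup_ne_top fun htop => ?_
  obtain ⟨a, ha⟩ := h.exists_eq_smul (i := B.subtype) (f := C.subtype ∘ₗ e.toLinearMap)
    (by rw [Submodule.ker_subtype]; exact bot_le)
  obtain ⟨s, hs, t, ht, hst⟩ := Submodule.mem_sup.1 ((Ideal.eq_top_iff_one _).1 htop)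
  have := IsSimpleModule.nontrivial Rᵐᵒᵖ B
  obtain ⟨b, hb⟩ := exists_ne (0 : B)
  have hab : a * b = e b := (LinearMap.congr_fun ha b).symm
  have hsb : unop s * (e b : R) = 0 := by
    rw [← hab, ← mul_assoc]
    exact hB _ ((Module.annihilator Rᵐᵒᵖ U).mul_mem_left (op a) hs) b b.2
  have htb : unop t * (e b : R) = 0 := hC _ ht _ (e b).2
  refine (e.map_ne_zero_iff.2 hb) (Subtype.ext ?_)
  rw [← one_mul (e b : R), ← unop_one, ← hst, unop_add, add_mul, hsb, htb, add_zero]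
  rfl

theorem LeftFGF.exists_linearEquiv_submodule (h : LeftFGF R) [IsSemiprimaryRing R]
    (W : Type*) [AddCommGroup W] [Module Rᵐᵒᵖ W] [IsSimpleModule Rᵐᵒᵖ W] :
    ∃ B : Submodule Rᵐᵒᵖ R, Nonempty (W ≃ₗ[Rᵐᵒᵖ] B) := by
  set M := Rᵐᵒᵖ ⧸ Ring.jacobson Rᵐᵒᵖ
  have hex (U : {U : Submodule Rᵐᵒᵖ M // IsSimpleModule Rᵐᵒᵖ U}) : ∃ B : Submodule Rᵐᵒᵖ R,
      IsSimpleModule Rᵐᵒᵖ B ∧ ∀ p ∈ annihilatorOp R U.1, ∀ b ∈ B, p * b = 0 := by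
    have := U.2
    have := IsSimpleModule.nontrivial Rᵐᵒᵖ U.1
    exact h.exists_isSimpleModule_annihilatorOp U.1
  choose B hB hUB using hex
  choose σ e using fun U => exists_submodule_quotient_jacobson_linearEquiv (S := Rᵐᵒᵖ) (B U)
  have hσ (U) : IsSimpleModule Rᵐᵒᵖ (σ U) := .congr (e U).some
  obtain ⟨T, ⟨eT⟩⟩ := exists_submodule_quotient_jacobson_linearEquiv (S := Rᵐᵒᵖ) W
  have : IsSimpleModule Rᵐᵒᵖ T := .congr eT
  obtain ⟨U, ⟨eU⟩⟩ := exists_nonempty_linearEquiv_of_finite_isotypicComponents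
    (fun U => ⟨σ U, hσ U⟩) (fun U V ⟨eUV⟩ => by
      have := U.2
      have := V.2
      exact h.nonempty_linearEquiv_of_annihilatorOp (hUB U) (hUB V)
        ((e U).some.symm ≪≫ₗ eUV ≪≫ₗ (e V).some)) T
  exact ⟨B U, ⟨eT.symm ≪≫ₗ eU.symm ≪≫ₗ (e U).some⟩⟩

theorem LeftFGF.rightKasch (h : LeftFGF R) [IsSemiprimaryRing R] : RightKasch R := by
  rintro M _ _ ⟨m, hm⟩ hM
  have : Module.Finite Rᵐᵒᵖ M := ⟨⟨{m}, by simpa using hm⟩⟩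
  obtain ⟨N, hN⟩ := IsCoatomic.exists_coatom (Submodule Rᵐᵒᵖ M)
  have := isSimpleModule_iff_isCoatom.2 hN
  have := IsSimpleModule.nontrivial Rᵐᵒᵖ (M ⧸ N)
  obtain ⟨B, ⟨e⟩⟩ := h.exists_linearEquiv_submodule (M ⧸ N)
  obtain ⟨x, hx⟩ := exists_ne (0 : M ⧸ N)
  obtain ⟨y, rfl⟩ := N.mkQ_surjective x
  refine ⟨B.subtype ∘ₗ e.toLinearMap ∘ₗ N.mkQ, fun h0 => hx (e.map_eq_zero_iff.1 ?_)⟩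
  exact Subtype.ext (LinearMap.congr_fun h0 y)

end SimpleCount

section Extension

variable {R L M P : Type*} [Ring R] [AddCommGroup L] [Module R L] [AddCommGroup M] [Module R M]
  [AddCommGroup P] [Module R P]

theorem exists_comp_subtype_eq_of_forall_mem {N : Submodule R L} {a : P →ₗ[R] L}
    (ha : Surjective (N.mkQ ∘ₗ a)) {f : N →ₗ[R] M} {h : P →ₗ[R] M}
    (hfh : ∀ p (hp : a p ∈ N), h p = f ⟨a p, hp⟩) : ∃ g : L →ₗ[R] M, g ∘ₗ N.subtype = f := by
  let φ : P × N →ₗ[R] L := a.coprod N.subtype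
  have hφ : Surjective φ := fun x => by
    obtain ⟨p, hp⟩ := ha (N.mkQ x)
    exact ⟨(p, ⟨x - a p, (Submodule.Quotient.eq N).1 hp.symm⟩), add_sub_cancel (a p) x⟩
  have hker : LinearMap.ker φ ≤ LinearMap.ker (h.coprod f) := fun ⟨p, n⟩ hpn => by
    have hn : a p = -n := eq_neg_of_add_eq_zero_left hpn
    have hp : a p ∈ N := hn ▸ N.neg_mem n.2
    have hpn' : (⟨a p, hp⟩ : N) = -n := Subtype.ext hn
    rw [LinearMap.mem_ker, LinearMap.coprod_apply, hfh p hp, hpn', map_neg, neg_add_cancel]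
  refine ⟨(LinearMap.ker φ).liftQ _ hker ∘ₗ (φ.quotKerEquivOfSurjective hφ).symm.toLinearMap,
    LinearMap.ext fun n => ?_⟩
  have hn : (φ.quotKerEquivOfSurjective hφ).symm n = (LinearMap.ker φ).mkQ (0, n) :=
    (LinearEquiv.symm_apply_eq _).2 (by simp [φ])
  simp [hn]

end Extension

section Ext

open CategoryTheory

variable {R : Type u} [Ring R] {F M : Type u} [AddCommGroup F] [Module R F] [AddCommGroup M]
  [Module R M]

theorem extVanish_iff_forall_exists_comp_eq (P : ProjectiveResolution (ModuleCat.of R F)) :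
    ExtVanish R F M ↔ ∀ g : P.complex.X 1 ⟶ ModuleCat.of R M, P.complex.d 2 1 ≫ g = 0 →
      ∃ h : P.complex.X 0 ⟶ ModuleCat.of R M, P.complex.d 1 0 ≫ h = g := by
  rw [ExtVanish, ← ModuleCat.isZero_iff_subsingleton,
    (P.isoExt (R := ℤ) 1 (ModuleCat.of R M)).isZero_iff,
    ← HomologicalComplex.exactAt_iff_isZero_homology,
    HomologicalComplex.exactAt_iff' _ 0 1 2 (by simp) (by simp), ShortComplex.moduleCat_exact_iff]
  rfl

theorem extVanish_of_injective [Module.Injective R M] : ExtVanish R F M := by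
  let P := ProjectiveResolution.of (ModuleCat.of R F)
  have : Injective (ModuleCat.of R M) := Module.injective_object_of_injective_module R M
  exact (extVanish_iff_forall_exists_comp_eq P).2 fun g hg =>
    ⟨(P.exact_succ 0).descToInjective g hg, (P.exact_succ 0).comp_descToInjective g hg⟩

theorem ExtVanish.exists_comp_subtype_eq {L : Type u} [AddCommGroup L] [Module R L]
    {N : Submodule R L} (h : ExtVanish R (L ⧸ N) M) (f : N →ₗ[R] M) :
    ∃ g : L →ₗ[R] M, g ∘ₗ N.subtype = f := by
  let P := ProjectiveResolution.of (ModuleCat.of R (L ⧸ N))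
  let π : P.complex.X 0 ⟶ ModuleCat.of R (L ⧸ N) := P.π.f 0
  have hπ : Surjective π.hom := (ModuleCat.epi_iff_surjective _).1 (inferInstanceAs (Epi (P.π.f 0)))
  let q : ModuleCat.of R L ⟶ ModuleCat.of R (L ⧸ N) := ModuleCat.ofHom N.mkQ
  have : Epi q := (ModuleCat.epi_iff_surjective q).2 N.mkQ_surjective
  let a := Projective.factorThru π q
  have ha : N.mkQ ∘ₗ a.hom = π.hom := ModuleCat.hom_ext_iff.1 (Projective.factorThru_comp π q)
  have had (y : P.complex.X 1) : a.hom ((P.complex.d 1 0).hom y) ∈ N :=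
    (Submodule.Quotient.mk_eq_zero N).1 ((LinearMap.congr_fun ha _).trans
      (LinearMap.congr_fun (ModuleCat.hom_ext_iff.1 P.complex_d_comp_π_f_zero) y))
  let b : P.complex.X 1 →ₗ[R] N := (a.hom ∘ₗ (P.complex.d 1 0).hom).codRestrict N had
  have hdd (z : P.complex.X 2) : (P.complex.d 1 0).hom ((P.complex.d 2 1).hom z) = 0 :=
    LinearMap.congr_fun (ModuleCat.hom_ext_iff.1 (P.complex.d_comp_d 2 1 0)) z
  have hb (z : P.complex.X 2) : b ((P.complex.d 2 1).hom z) = 0 :=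
    Subtype.ext ((congrArg a.hom (hdd z)).trans (map_zero a.hom))
  obtain ⟨k, hk⟩ := (extVanish_iff_forall_exists_comp_eq P).1 h (ModuleCat.ofHom (f ∘ₗ b))
    (ModuleCat.hom_ext (LinearMap.ext fun z => (congrArg f (hb z)).trans (map_zero f)))
  refine exists_comp_subtype_eq_of_forall_mem (a := a.hom) (h := k.hom) (ha ▸ hπ) fun p hp => ?_
  obtain ⟨y, rfl⟩ := (ShortComplex.moduleCat_exact_iff _).1 P.exact₀ p
    ((LinearMap.congr_fun ha p).symm.trans ((Submodule.Quotient.mk_eq_zero N).2 hp))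
  exact LinearMap.congr_fun (ModuleCat.hom_ext_iff.1 hk) y

theorem FPInjective.injective [IsNoetherianRing R] (h : FPInjective R M) : Module.Injective R M :=
  Module.Baer.iff_injective.1 fun I f => by
    obtain ⟨g, hg⟩ :=
      (h (R ⧸ I) (Module.finitePresentation_of_finite R _)).exists_comp_subtype_eq f
    exact ⟨g, fun x hx => LinearMap.congr_fun hg ⟨x, hx⟩⟩

end Ext

section QuasiFrobenius

variable {R : Type u} [Ring R]

theorem QF.wqf (h : QF R) : WQF R := by
  obtain ⟨_, _, _, _⟩ := h
  have : IsNoetherianRing Rᵐᵒᵖ := isNoetherianRing_op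
  refine ⟨fun I _ => Module.finitePresentation_of_finite R I, fun I hI => ?_,
    fun _ _ _ _ => extVanish_of_injective, fun _ _ _ _ => extVanish_of_injective⟩
  have : Module.Finite Rᵐᵒᵖ I := .of_fg hI
  exact Module.finitePresentation_of_finite Rᵐᵒᵖ I

theorem LeftFGF.isArtinianRing_of_rightKasch [IsNoetherianRing R] (h : LeftFGF R)
    (hR : RightKasch R) : IsArtinianRing R :=
  have := h.isSemiprimaryRing hR.isIdempotentRich_quotient_jacobson
  IsSemiprimaryRing.isNoetherian_iff_isArtinian.1 ‹IsNoetherianRing R›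

theorem LeftFGF.qf_of_rightKasch [IsNoetherianRing R] (h : LeftFGF R) (hR : RightKasch R) :
    QF R := by
  have := h.isArtinianRing_of_rightKasch hR
  have := h.isNoetherian_op hR
  have := h.injective_op
  exact ⟨‹_›, ‹_›, hR.injective, ‹_›⟩

end QuasiFrobenius

/-- Proposition 2.14: for a left noetherian left FGF-ring the following are equivalent. -/
theorem stmt_15 (R : Type u) [Ring R] (h1 : IsNoetherianRing R) (h2 : LeftFGF R) :
    List.TFAE
      [QF R,
       WQF R,
       FPInjective R R,
       RightKasch R,
       Semiregular R,
       LeftSemiartinian R ∨ LeftSemiartinian Rᵐᵒᵖ,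
       EssentialSub R (socle R R)] := by
  have kasch (h : IsIdempotentRich (R ⧸ Ring.jacobson R)) : RightKasch R :=
    have := h2.isSemiprimaryRing h
    h2.rightKasch
  tfae_have 1 → 2 := QF.wqf
  tfae_have 2 → 3 := fun h => h.2.2.1
  tfae_have 3 → 5 := fun h =>
    have := h.injective
    semiregular_of_injective
  tfae_have 5 → 4 := fun h => kasch h.isIdempotentRich_quotient_jacobson
  tfae_have 4 → 1 := h2.qf_of_rightKasch
  tfae_have 4 → 7 := fun h =>
    have := h2.isArtinianRing_of_rightKasch h
    essentialSub_socle_iff_isAtomic.2 inferInstance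
  tfae_have 7 → 6 := fun h =>
    have := essentialSub_socle_iff_isAtomic.1 h
    Or.inl h2.leftSemiartinian_of_isAtomic
  tfae_have 6 → 4 := fun h => kasch <| h.elim (·.isIdempotentRich_quotient_jacobson)
    fun h => isIdempotentRich_quotient_jacobson_of_op h.isIdempotentRich_quotient_jacobson
  tfae_finish
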